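/- Let n ≥ 3 and let X ⊂ ℂⁿ be an algebraic curve. Then there exist a real number r > 0 and a surjective linear map π : ℂⁿ → ℂⁿ⁻¹ such that the restriction of π to X is a proper map, and there exists C ≥ 1 such that C⁻¹·‖x − y‖ ≤ ‖π(x) − π(y)‖ ≤ C·‖x − y‖ for all x, y ∈ X \ π⁻¹(B(0,r)); moreover π maps X \ π⁻¹(B(0,r)) into ℂⁿ⁻¹ \ B(0,r). -/

import Mathlib

open Set Metric

noncomputable section

/-- An algebraic set in ℂᵏ: the common zero set of a finite family of polynomials. -/
def IsAlgebraicSet {k : ℕ} (X : Set (EuclideanSpace ℂ (Fin k))) : Prop :=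
  ∃ S : Finset (MvPolynomial (Fin k) ℂ),
    X = {x | ∀ p ∈ S, MvPolynomial.eval (fun i => x i) p = 0}

/-- An irreducible algebraic curve: an infinite algebraic set all of whose proper algebraic
subsets are finite. -/
def IsIrreducibleAlgebraicCurve {k : ℕ} (X : Set (EuclideanSpace ℂ (Fin k))) : Prop :=
  IsAlgebraicSet X ∧ X.Infinite ∧ ∀ Y, IsAlgebraicSet Y → Y ⊂ X → Y.Finite

/-- An algebraic curve: a finite union of irreducible algebraic curves. -/
def IsAlgebraicCurve {k : ℕ} (X : Set (EuclideanSpace ℂ (Fin k))) : Prop :=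
  ∃ F : Finset (Set (EuclideanSpace ℂ (Fin k))),
    (∀ C ∈ F, IsIrreducibleAlgebraicCurve C) ∧ X = ⋃ C ∈ F, C

/-- `f` maps `X` bijectively onto `Y` and is bi-Lipschitz (outer metric). -/
def IsBiLipschitzOn {E F : Type*} [NormedAddCommGroup E] [NormedAddCommGroup F]
    (f : E → F) (X : Set E) (Y : Set F) : Prop :=
  Set.BijOn f X Y ∧ ∃ C : ℝ, 1 ≤ C ∧ ∀ x ∈ X, ∀ x' ∈ X,
    C⁻¹ * ‖x - x'‖ ≤ ‖f x - f x'‖ ∧ ‖f x - f x'‖ ≤ C * ‖x - x'‖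

/-- `X` and `Y` are bi-Lipschitz equivalent (with respect to the outer Euclidean metric). -/
def BiLipschitzEquiv {E F : Type*} [NormedAddCommGroup E] [NormedAddCommGroup F]
    (X : Set E) (Y : Set F) : Prop :=
  ∃ f : E → F, IsBiLipschitzOn f X Y

/-- `X` and `Y` are bi-Lipschitz equivalent at infinity. -/
def BiLipschitzEquivAtInfinity {E F : Type*} [NormedAddCommGroup E] [NormedAddCommGroup F]
    (X : Set E) (Y : Set F) : Prop :=
  ∃ (K₁ : Set E) (K₂ : Set F), IsCompact K₁ ∧ IsCompact K₂ ∧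
    BiLipschitzEquiv (X \ K₁) (Y \ K₂)

/-- The germs `(X, p)` and `(Y, q)` are bi-Lipschitz equivalent. -/
def GermBiLipschitzEquiv {E F : Type*} [NormedAddCommGroup E] [NormedAddCommGroup F]
    (X : Set E) (p : E) (Y : Set F) (q : F) : Prop :=
  ∃ (U : Set E) (V : Set F), IsOpen U ∧ IsOpen V ∧ p ∈ U ∧ q ∈ V ∧
    ∃ f : E → F, IsBiLipschitzOn f (X ∩ U) (Y ∩ V) ∧ f p = q

/-- `γ` maps `D` homeomorphically onto `S`. -/
def MapsHomeomorphicallyOnto {E : Type*} [TopologicalSpace E]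
    (γ : ℂ → E) (D : Set ℂ) (S : Set E) : Prop :=
  Set.InjOn γ D ∧ γ '' D = S ∧ ContinuousOn γ D ∧
    ∃ σ : E → ℂ, ContinuousOn σ S ∧ ∀ z ∈ D, σ (γ z) = z

/-- A regular point of a curve `X ⊂ ℂᵏ`: some neighborhood of `p` in `X` is the
homeomorphic image of an injective holomorphic map with nowhere-vanishing derivative. -/
def IsRegularPoint {k : ℕ} (X : Set (EuclideanSpace ℂ (Fin k)))
    (p : EuclideanSpace ℂ (Fin k)) : Prop :=
  ∃ (U : Set (EuclideanSpace ℂ (Fin k))) (D : Set ℂ) (γ : ℂ → EuclideanSpace ℂ (Fin k)),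
    IsOpen U ∧ p ∈ U ∧ IsOpen D ∧ DifferentiableOn ℂ γ D ∧ Set.InjOn γ D ∧
    (∀ z ∈ D, deriv γ z ≠ 0) ∧ MapsHomeomorphicallyOnto γ D (X ∩ U)

/-- The set of singular points of `X`. -/
def SingularSet {k : ℕ} (X : Set (EuclideanSpace ℂ (Fin k))) :
    Set (EuclideanSpace ℂ (Fin k)) :=
  {p ∈ X | ¬ IsRegularPoint X p}

/-- `B` is a (smooth) branch through `q` with tangent vector `v`. -/
def IsBranchAt (B : Set (EuclideanSpace ℂ (Fin 2))) (q v : EuclideanSpace ℂ (Fin 2)) : Prop :=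
  ∃ (D : Set ℂ) (γ : ℂ → EuclideanSpace ℂ (Fin 2)) (z₀ : ℂ),
    IsOpen D ∧ z₀ ∈ D ∧ DifferentiableOn ℂ γ D ∧ Set.InjOn γ D ∧
    (∀ z ∈ D, deriv γ z ≠ 0) ∧ MapsHomeomorphicallyOnto γ D B ∧
    γ z₀ = q ∧ deriv γ z₀ = v

/-- `q` is a node of the plane curve `Y`: near `q`, `Y` is the union of two smooth branches
meeting only at `q` with distinct tangent lines. -/
def IsNode (Y : Set (EuclideanSpace ℂ (Fin 2))) (q : EuclideanSpace ℂ (Fin 2)) : Prop :=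
  q ∈ Y ∧ ∃ (U B₁ B₂ : Set (EuclideanSpace ℂ (Fin 2))) (v₁ v₂ : EuclideanSpace ℂ (Fin 2)),
    IsOpen U ∧ q ∈ U ∧ Y ∩ U = B₁ ∪ B₂ ∧ B₁ ∩ B₂ = {q} ∧
    IsBranchAt B₁ q v₁ ∧ IsBranchAt B₂ q v₂ ∧ ∀ c : ℂ, v₂ ≠ c • v₁

/-- The set of points of `ℂ²` having more than one `π`-preimage in `X`. -/
def MultipleSet {n : ℕ} (π : EuclideanSpace ℂ (Fin n) →ₗ[ℂ] EuclideanSpace ℂ (Fin 2))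
    (X : Set (EuclideanSpace ℂ (Fin n))) : Set (EuclideanSpace ℂ (Fin 2)) :=
  {q | ∃ x ∈ X, ∃ y ∈ X, x ≠ y ∧ π x = q ∧ π y = q}

/-- `π` is a generic plane projection for the algebraic curve `X ⊂ ℂⁿ`. -/
def IsGenericPlaneProjection {n : ℕ}
    (π : EuclideanSpace ℂ (Fin n) →ₗ[ℂ] EuclideanSpace ℂ (Fin 2))
    (X : Set (EuclideanSpace ℂ (Fin n))) : Prop :=
  Function.Surjective π ∧
  (∀ K : Set (EuclideanSpace ℂ (Fin 2)), IsCompact K → IsCompact (X ∩ ⇑π ⁻¹' K)) ∧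
  (MultipleSet π X).Finite ∧
  (∀ q ∈ MultipleSet π X, ∃ x y, x ≠ y ∧ {z ∈ X | π z = q} = {x, y} ∧
    IsRegularPoint X x ∧ IsRegularPoint X y) ∧
  (∀ q ∈ MultipleSet π X, IsNode (⇑π '' X) q) ∧
  (∀ p ∈ X, π p ∉ MultipleSet π X →
    ∃ (U : Set (EuclideanSpace ℂ (Fin n))) (V : Set (EuclideanSpace ℂ (Fin 2))),
      IsOpen U ∧ IsOpen V ∧ p ∈ U ∧ π p ∈ V ∧
      IsBiLipschitzOn (⇑π) (X ∩ U) ((⇑π '' X) ∩ V))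

/-- The complex projective plane `ℂP²`. -/
abbrev ProjPlane : Type := Projectivization ℂ (Fin 3 → ℂ)

instance : TopologicalSpace ProjPlane :=
  inferInstanceAs (TopologicalSpace (Quotient (projectivizationSetoid ℂ (Fin 3 → ℂ))))

/-- The embedding `ℂ² → ℂP²`, `(x, y) ↦ (x : y : 1)`. -/
def toProj (p : EuclideanSpace ℂ (Fin 2)) : ProjPlane :=
  Projectivization.mk ℂ ![p 0, p 1, 1] (fun h => by simpa using congrFun h 2)

/-- The line at infinity in `ℂP²`. -/
def lineAtInfinity : Set ProjPlane := {P | P.rep 2 = 0}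

/-- The projective closure of a plane curve `X ⊂ ℂ²`: the topological closure in `ℂP²`. -/
def projClosure (X : Set (EuclideanSpace ℂ (Fin 2))) : Set ProjPlane :=
  closure (toProj '' X)

/-- The germs `(A, p)` and `(B, q)` are (ambient) topologically equivalent. -/
def GermTopEquiv {T : Type*} [TopologicalSpace T] (A : Set T) (p : T) (B : Set T) (q : T) :
    Prop :=
  ∃ (U V : Set T) (φ ψ : T → T),
    IsOpen U ∧ IsOpen V ∧ p ∈ U ∧ q ∈ V ∧
    ContinuousOn φ U ∧ ContinuousOn ψ V ∧ Set.MapsTo φ U V ∧ Set.MapsTo ψ V U ∧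
    (∀ x ∈ U, ψ (φ x) = x) ∧ (∀ y ∈ V, φ (ψ y) = y) ∧
    φ p = q ∧ φ '' (A ∩ U) = B ∩ V

/-- The `i`-th standard affine chart of `ℂP²`. -/
def chart (i : Fin 3) (P : ProjPlane) : EuclideanSpace ℂ (Fin 2) :=
  (EuclideanSpace.equiv (Fin 2) ℂ).symm fun j => P.rep (i.succAbove j) / P.rep i

/-- A regular point of a curve `C ⊂ ℂP²`: read in a standard affine chart, some neighborhood
of `p` in `C` is the homeomorphic image of an injective holomorphic map with
nowhere-vanishing derivative. -/
def IsRegularPointProj (C : Set ProjPlane) (p : ProjPlane) : Prop :=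
  ∃ i : Fin 3, p.rep i ≠ 0 ∧
    ∃ W : Set ProjPlane, IsOpen W ∧ p ∈ W ∧ W ⊆ {P : ProjPlane | P.rep i ≠ 0} ∧
      ∃ (D : Set ℂ) (γ : ℂ → EuclideanSpace ℂ (Fin 2)),
        IsOpen D ∧ DifferentiableOn ℂ γ D ∧ Set.InjOn γ D ∧ (∀ z ∈ D, deriv γ z ≠ 0) ∧
        MapsHomeomorphicallyOnto γ D (chart i '' (C ∩ W))

/-- The set of singular points of a curve `C ⊂ ℂP²`. -/
def SingularSetProj (C : Set ProjPlane) : Set ProjPlane :=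
  {p ∈ C | ¬ IsRegularPointProj C p}

/-- `C` is an irreducible component of the algebraic curve `X`. -/
def IsIrreducibleComponent {k : ℕ} (C X : Set (EuclideanSpace ℂ (Fin k))) : Prop :=
  IsIrreducibleAlgebraicCurve C ∧ C ⊆ X ∧
    ∀ C', IsIrreducibleAlgebraicCurve C' → C' ⊆ X → C ⊆ C' → C' = C

/-- The degree of an algebraic plane curve: the minimal degree of a nonzero polynomial
vanishing identically on it. -/
def curveDegree (X : Set (EuclideanSpace ℂ (Fin 2))) : ℕ :=
  sInf {d | ∃ P : MvPolynomial (Fin 2) ℂ, P ≠ 0 ∧ P.totalDegree = d ∧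
    ∀ x ∈ X, MvPolynomial.eval (fun i => x i) P = 0}


def HB {n : ℕ} (X : Set (Fin n → ℂ)) : Prop :=
  ∃ c : ℕ, ∀ N : ℕ, ∃ (ι : Type) (_ : Fintype ι) (b : ι → (Fin n → ℂ) → ℂ),
    Fintype.card ι ≤ c * (N + 1) ∧
    ∀ p : MvPolynomial (Fin n) ℂ, p.totalDegree ≤ N →
      ∃ a : ι → ℂ, ∀ x ∈ X, MvPolynomial.eval x p = ∑ k, a k * b k x

lemma HB_empty {n : ℕ} : HB (∅ : Set (Fin n → ℂ)) :=
  ⟨0, fun _ => ⟨Empty, inferInstance, fun e => e.elim, by simp, fun _ _ => ⟨fun _ => 0, by simp⟩⟩⟩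

lemma HB_union {n : ℕ} {X Y : Set (Fin n → ℂ)} (hX : HB X) (hY : HB Y) : HB (X ∪ Y) := by
  classical
  obtain ⟨c, hc⟩ := hX
  obtain ⟨d, hd⟩ := hY
  refine ⟨c + d, fun N => ?_⟩
  obtain ⟨ι, _, b, hι, hb⟩ := hc N
  obtain ⟨κ, _, b', hκ, hb'⟩ := hd N
  refine ⟨ι ⊕ κ, inferInstance,
    Sum.elim (fun i x => if x ∈ X then b i x else 0) (fun i x => if x ∈ X then 0 else b' i x), ?_, ?_⟩
  · rw [Fintype.card_sum]; nlinarith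
  · intro p hp
    obtain ⟨a, ha⟩ := hb p hp
    obtain ⟨a', ha'⟩ := hb' p hp
    refine ⟨Sum.elim a a', fun x hx => ?_⟩
    by_cases h : x ∈ X
    · simp [Fintype.sum_sum_type, h, ha x h]
    · simp [Fintype.sum_sum_type, h, ha' x (hx.resolve_left h)]

lemma HB_biUnion {n : ℕ} {α : Type*} (F : Finset α) (f : α → Set (Fin n → ℂ))
    (h : ∀ C ∈ F, HB (f C)) : HB (⋃ C ∈ F, f C) := by
  classical
  induction F using Finset.induction_on with
  | empty => simpa using HB_empty
  | insert a s ha ih =>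
    rw [Finset.set_biUnion_insert]
    exact HB_union (h _ (Finset.mem_insert_self _ _))
      (ih fun C hC => h C (Finset.mem_insert_of_mem hC))

section
variable {n s m : ℕ} {A : Type*} [CommRing A] [Algebra ℂ A]

def degSub (g : MvPolynomial (Fin s) ℂ →ₐ[ℂ] A) (b : Fin m → A) (D : ℕ) : Submodule ℂ A where
  carrier := {a | ∃ e : Fin m → MvPolynomial (Fin s) ℂ, (∀ k, (e k).totalDegree ≤ D) ∧
    a = ∑ k, g (e k) * b k}
  zero_mem' := ⟨0, by simp, by simp⟩
  add_mem' := by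
    rintro _ _ ⟨e, he, rfl⟩ ⟨f, hf, rfl⟩
    refine ⟨e + f, fun k => (MvPolynomial.totalDegree_add _ _).trans (max_le (he k) (hf k)), ?_⟩
    simp [add_mul, Finset.sum_add_distrib]
  smul_mem' := by
    rintro c _ ⟨e, he, rfl⟩
    refine ⟨fun k => c • e k, fun k => (MvPolynomial.totalDegree_smul_le _ _).trans (he k), ?_⟩
    simp [Finset.smul_sum]

lemma degSub_mono (g : MvPolynomial (Fin s) ℂ →ₐ[ℂ] A) (b : Fin m → A) {D D' : ℕ} (h : D ≤ D') :
    degSub g b D ≤ degSub g b D' := fun _ ⟨e, he, h'⟩ => ⟨e, fun k => (he k).trans h, h'⟩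

lemma degSub_mul (g : MvPolynomial (Fin s) ℂ →ₐ[ℂ] A) (b : Fin m → A) {D d : ℕ} (x : A)
    (hx : ∀ k, x * b k ∈ degSub g b d) {a : A} (ha : a ∈ degSub g b D) :
    x * a ∈ degSub g b (D + d) := by
  obtain ⟨e, he, rfl⟩ := ha
  rw [Finset.mul_sum]
  refine Submodule.sum_mem _ fun k _ => ?_
  obtain ⟨f, hf, hfe⟩ := hx k
  refine ⟨fun l => e k * f l, fun l => (MvPolynomial.totalDegree_mul _ _).trans
    (add_le_add (he k) (hf l)), ?_⟩
  rw [mul_left_comm, hfe, Finset.mul_sum]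
  simp [mul_assoc]

lemma degSub_poly (g : MvPolynomial (Fin s) ℂ →ₐ[ℂ] A) (b : Fin m → A) {d : ℕ}
    (q : MvPolynomial (Fin n) ℂ →ₐ[ℂ] A) (h1 : 1 ∈ degSub g b d)
    (hx : ∀ i k, q (MvPolynomial.X i) * b k ∈ degSub g b d) (N : ℕ)
    (p : MvPolynomial (Fin n) ℂ) (hp : p.totalDegree ≤ N) : q p ∈ degSub g b (d * (N + 1)) := by
  have key : ∀ N : ℕ, ∀ σ : Fin n →₀ ℕ, σ.degree = N →
      q (MvPolynomial.monomial σ 1) ∈ degSub g b (d * (N + 1)) := by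
    intro N
    induction N with
    | zero =>
      intro σ hσ
      rw [Finsupp.degree_eq_zero_iff] at hσ
      subst hσ
      simpa using h1
    | succ N ih =>
      intro σ hσ
      obtain ⟨i, hi⟩ : ∃ i, σ i ≠ 0 := by
        by_contra! h
        have : σ = 0 := Finsupp.ext h
        simp [this] at hσ
      have hle : Finsupp.single i 1 ≤ σ := by
        rw [Finsupp.single_le_iff]; omega
      have e : σ = Finsupp.single i 1 + (σ - Finsupp.single i 1) := (add_tsub_cancel_of_le hle).symm
      have hd : (σ - Finsupp.single i 1).degree = N := by
        have := congrArg Finsupp.degree e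
        rw [map_add, Finsupp.degree_single] at this
        omega
      have := degSub_mul g b _ (hx i) (ih _ hd)
      rw [← map_mul, MvPolynomial.X, MvPolynomial.monomial_mul, ← e] at this
      simpa [mul_add] using this
  rw [p.as_sum, map_sum]
  refine Submodule.sum_mem _ fun σ hσ => ?_
  have h2 : σ.degree ≤ N := le_trans (by
    exact MvPolynomial.le_totalDegree hσ) hp
  have : MvPolynomial.monomial σ (p.coeff σ) = p.coeff σ • MvPolynomial.monomial σ (1:ℂ) := by
    simp [MvPolynomial.smul_monomial]
  rw [this, map_smul]
  exact Submodule.smul_mem _ _ (degSub_mono g b (by gcongr) (key _ σ rfl))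

lemma exists_deg (g : MvPolynomial (Fin s) ℂ →ₐ[ℂ] A) (hg : g.Finite) :
    ∃ (m : ℕ) (b : Fin m → A), ∀ a : A, ∃ d, a ∈ degSub g b d := by
  let _ := g.toRingHom.toAlgebra
  have : Module.Finite (MvPolynomial (Fin s) ℂ) A := hg
  obtain ⟨m, b, hb⟩ := Module.Finite.exists_fin (R := MvPolynomial (Fin s) ℂ) (M := A)
  refine ⟨m, b, fun a => ?_⟩
  have ha : a ∈ Submodule.span (MvPolynomial (Fin s) ℂ) (Set.range b) := hb ▸ Submodule.mem_top
  obtain ⟨e, he⟩ := (Submodule.mem_span_range_iff_exists_fun _).1 ha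
  refine ⟨Finset.univ.sup fun k => (e k).totalDegree, e,
    fun k => Finset.le_sup (f := fun k => (e k).totalDegree) (Finset.mem_univ k), he.symm⟩

lemma exists_deg' (g : MvPolynomial (Fin s) ℂ →ₐ[ℂ] A) (hg : g.Finite)
    (q : MvPolynomial (Fin n) ℂ →ₐ[ℂ] A) :
    ∃ (m : ℕ) (b : Fin m → A) (d : ℕ), ∀ N, ∀ p : MvPolynomial (Fin n) ℂ, p.totalDegree ≤ N →
      q p ∈ degSub g b (d * (N + 1)) := by
  obtain ⟨m, b, h⟩ := exists_deg g hg
  choose D hD using h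
  obtain ⟨d, hd⟩ : ∃ d, ∀ i k, D (q (MvPolynomial.X i) * b k) ≤ d := by
    refine ⟨∑ i, ∑ k, D (q (MvPolynomial.X i) * b k), fun i k => ?_⟩
    refine le_trans ?_ (Finset.single_le_sum (f := fun i => ∑ k, D (q (MvPolynomial.X i) * b k))
      (fun _ _ => Nat.zero_le _) (Finset.mem_univ i))
    exact Finset.single_le_sum (f := fun k => D (q (MvPolynomial.X i) * b k))
      (fun _ _ => Nat.zero_le _) (Finset.mem_univ k)
  refine ⟨m, b, D 1 + d, fun N p hp => ?_⟩
  refine degSub_poly g b q (degSub_mono g b (Nat.le_add_right _ _) (hD 1)) (fun i k => ?_) N p hp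
  exact degSub_mono g b ((hd i k).trans (Nat.le_add_left _ _)) (hD _)
end

lemma eval_box {s D : ℕ} {A : Type*} [CommRing A] [Algebra ℂ A]
    (φ : MvPolynomial (Fin s) ℂ →ₐ[ℂ] A)
    (p : MvPolynomial (Fin s) ℂ) (hp : p.totalDegree ≤ D) :
    φ p = ∑ α : Fin s → Fin (D + 1),
      p.coeff (Finsupp.equivFunOnFinite.symm fun i => (α i : ℕ)) •
        φ (MvPolynomial.monomial (Finsupp.equivFunOnFinite.symm fun i => (α i : ℕ)) 1) := by
  classical
  conv_lhs => rw [p.as_sum, map_sum]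
  symm
  have hinj : Function.Injective (fun α : Fin s → Fin (D+1) =>
      (Finsupp.equivFunOnFinite.symm fun i => (α i : ℕ) : Fin s →₀ ℕ)) := by
    intro α β h
    have := Finsupp.equivFunOnFinite.symm.injective h
    ext i
    exact congrFun this i
  rw [← Finset.sum_image (s := Finset.univ) (f := fun σ : Fin s →₀ ℕ =>
    p.coeff σ • φ (MvPolynomial.monomial σ 1)) (g := fun α : Fin s → Fin (D+1) =>
      (Finsupp.equivFunOnFinite.symm fun i => (α i : ℕ) : Fin s →₀ ℕ)) (hinj.injOn)]
  symm
  have h1 : ∀ σ, φ (MvPolynomial.monomial σ (p.coeff σ)) = p.coeff σ • φ (MvPolynomial.monomial σ 1) := by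
    intro σ
    rw [← map_smul, MvPolynomial.smul_monomial]; simp
  simp_rw [h1]
  refine Finset.sum_subset ?_ ?_
  · intro σ hσ
    have h2 : σ.degree ≤ D := le_trans (by
      exact MvPolynomial.le_totalDegree hσ) hp
    refine Finset.mem_image.2 ⟨fun i => ⟨σ i, ?_⟩, Finset.mem_univ _, ?_⟩
    · have := Finsupp.le_degree i σ
      omega
    · ext i; simp
  · intro σ _ hσ
    simp [MvPolynomial.notMem_support_iff.1 hσ]

lemma lying {R A : Type*} [CommRing R] [CommRing A] (g : R →+* A) (hg : g.Finite)
    (hi : Function.Injective g) (P : Ideal R) [P.IsMaximal] :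
    ∃ Q : Ideal A, Q.IsMaximal ∧ ∀ p, g p ∈ Q ↔ p ∈ P := by
  let _ := g.toAlgebra
  have hfm : Module.Finite R A := hg
  obtain ⟨Q, hQ, hQP⟩ := Ideal.exists_ideal_over_maximal_of_isIntegral (S := A) P (by
    have : RingHom.ker (algebraMap R A) = ⊥ := (RingHom.injective_iff_ker_eq_bot _).1 hi
    rw [this]; exact bot_le)
  refine ⟨Q, hQ, fun p => ?_⟩
  rw [← hQP]; rfl

theorem HB_of_curve {n : ℕ} (S : Finset (MvPolynomial (Fin n) ℂ)) (C : Set (Fin n → ℂ))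
    (hC : C = {x | ∀ p ∈ S, MvPolynomial.eval x p = 0}) (hne : C.Nonempty)
    (hfin : ∀ f : MvPolynomial (Fin n) ℂ, (∃ x ∈ C, MvPolynomial.eval x f ≠ 0) →
      {x ∈ C | MvPolynomial.eval x f = 0}.Finite) : HB C := by
  classical
  let I : Ideal (MvPolynomial (Fin n) ℂ) := MvPolynomial.vanishingIdeal ℂ C
  have hI : ∀ p, p ∈ I ↔ ∀ x ∈ C, MvPolynomial.eval x p = 0 := fun p => Iff.rfl
  have hItop : I ≠ ⊤ := by
    intro h
    obtain ⟨x, hx⟩ := hne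
    have : (1 : MvPolynomial (Fin n) ℂ) ∈ I := h ▸ Submodule.mem_top
    simpa using (hI 1).1 this x hx
  have : Nontrivial (MvPolynomial (Fin n) ℂ ⧸ I) := Ideal.Quotient.nontrivial_iff.2 hItop
  obtain ⟨s, g, hginj, hgfin⟩ := exists_finite_inj_algHom_of_fg ℂ (MvPolynomial (Fin n) ℂ ⧸ I)
  let q := Ideal.Quotient.mkₐ ℂ I
  have hq : Function.Surjective q := Ideal.Quotient.mkₐ_surjective ℂ I
  have hs : s ≤ 1 := by
    by_contra! hs
    let i0 : Fin s := ⟨0, by omega⟩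
    let i1 : Fin s := ⟨1, hs⟩
    obtain ⟨f, hf⟩ := hq (g (MvPolynomial.X i0))
    obtain ⟨h, hh⟩ := hq (g (MvPolynomial.X i1))
    have hf0 : ∃ x ∈ C, MvPolynomial.eval x f ≠ 0 := by
      by_contra! h0
      have : q f = 0 := Ideal.Quotient.eq_zero_iff_mem.2 ((hI f).2 h0)
      rw [hf] at this
      exact MvPolynomial.X_ne_zero (R := ℂ) i0 (hginj (by rw [this, map_zero]))
    have key : ∀ c : ℂ, ∃ x ∈ {x ∈ C | MvPolynomial.eval x f = 0}, MvPolynomial.eval x h = c := by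
      intro c
      let P : Ideal (MvPolynomial (Fin s) ℂ) :=
        MvPolynomial.vanishingIdeal ℂ {(fun i => if i = i1 then c else 0 : Fin s → ℂ)}
      obtain ⟨Q, hQ, hQP⟩ := lying g.toRingHom hgfin hginj P
      have hM : (Q.comap q).IsMaximal := Ideal.comap_isMaximal_of_surjective q hq
      obtain ⟨x, hx⟩ := MvPolynomial.isMaximal_iff_eq_vanishingIdeal_singleton.1 hM
      have hmem : ∀ p, q p ∈ Q ↔ MvPolynomial.eval x p = 0 := by
        intro p
        rw [← Ideal.mem_comap, hx, MvPolynomial.mem_vanishingIdeal_singleton_iff]; rfl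
      have hgQ : ∀ p, g p ∈ Q ↔ MvPolynomial.eval (fun i => if i = i1 then c else 0 : Fin s → ℂ) p = 0 := by
        intro p
        refine (hQP p).trans ?_
        rw [MvPolynomial.mem_vanishingIdeal_singleton_iff]; rfl
      refine ⟨x, ⟨?_, ?_⟩, ?_⟩
      · rw [hC]
        intro p hp
        rw [← hmem]
        have : q p = 0 := Ideal.Quotient.eq_zero_iff_mem.2 ((hI p).2 fun y hy => by
          rw [hC] at hy; exact hy p hp)
        rw [this]; exact Q.zero_mem
      · rw [← hmem, hf, hgQ]
        have : i0 ≠ i1 := by simp [i0, i1]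
        simp [this]
      · have h1 : q (h - MvPolynomial.C c) ∈ Q := by
          have : q (h - MvPolynomial.C c) = g (MvPolynomial.X i1 - MvPolynomial.C c) := by
            rw [map_sub, map_sub, hh, ← MvPolynomial.algebraMap_eq, ← MvPolynomial.algebraMap_eq,
              AlgHom.commutes, AlgHom.commutes]
          rw [this, hgQ]
          simp
        rw [hmem] at h1
        simpa [sub_eq_zero] using h1
    have hfinite := (hfin f hf0).image (fun x => MvPolynomial.eval x h)
    refine Set.infinite_univ (α := ℂ) (hfinite.subset ?_)
    intro c _
    obtain ⟨x, hx, hxc⟩ := key c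
    exact ⟨x, hx, hxc⟩
  obtain ⟨m, b, d, hb⟩ := exists_deg' g hgfin q
  -- evaluation
  have hev : ∀ x ∈ C, ∃ φ : (MvPolynomial (Fin n) ℂ ⧸ I) →ₐ[ℂ] ℂ, ∀ p, φ (q p) = MvPolynomial.eval x p := by
    intro x hx
    refine ⟨Ideal.Quotient.liftₐ I (MvPolynomial.aeval x) (fun p hp => hp x hx), fun p => ?_⟩
    rfl
  have : Nonempty ((MvPolynomial (Fin n) ℂ ⧸ I) →ₐ[ℂ] ℂ) := ⟨(hev _ hne.some_mem).choose⟩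
  choose! φ hφ using hev
  refine ⟨(d + 1) * m, fun N => ⟨(Fin s → Fin (d * (N + 1) + 1)) × Fin m, inferInstance,
    fun k x => φ x (g (MvPolynomial.monomial (Finsupp.equivFunOnFinite.symm fun i => (k.1 i : ℕ)) 1)
      * b k.2), ?_, ?_⟩⟩
  · rw [Fintype.card_prod, Fintype.card_pi]
    simp only [Fintype.card_fin, Finset.prod_const, Finset.card_univ]
    have : (d * (N + 1) + 1) ^ s ≤ (d + 1) * (N + 1) := by
      calc (d * (N + 1) + 1) ^ s ≤ (d * (N + 1) + 1) ^ 1 := Nat.pow_le_pow_right (by omega) hs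
        _ ≤ _ := by nlinarith
    calc _ ≤ (d + 1) * (N + 1) * m := Nat.mul_le_mul_right _ this
      _ = _ := by ring
  · intro p hp
    obtain ⟨e, he, hpe⟩ := hb N p hp
    refine ⟨fun k => (e k.2).coeff (Finsupp.equivFunOnFinite.symm fun i => (k.1 i : ℕ)),
      fun x hx => ?_⟩
    rw [← hφ x hx, hpe, map_sum, Fintype.sum_prod_type_right]
    refine Finset.sum_congr rfl fun k _ => ?_
    rw [map_mul, eval_box g (e k) (he k), map_sum, Finset.sum_mul]
    refine Finset.sum_congr rfl fun α _ => ?_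
    rw [map_smul, smul_eq_mul, mul_assoc, ← map_mul]

/-- span of products of polynomials of bounded degree in two sets of variables -/
def TT (n M : ℕ) : Submodule ℂ ((Fin n → ℂ) × (Fin n → ℂ) → ℂ) :=
  Submodule.span ℂ {f | ∃ p q : MvPolynomial (Fin n) ℂ, p.totalDegree ≤ M ∧ q.totalDegree ≤ M ∧
    f = fun z => MvPolynomial.eval z.1 p * MvPolynomial.eval z.2 q}

lemma TT_mono {n M M' : ℕ} (h : M ≤ M') : TT n M ≤ TT n M' :=
  Submodule.span_mono fun _ ⟨p, q, hp, hq, e⟩ => ⟨p, q, hp.trans h, hq.trans h, e⟩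

lemma TT_mul {n M M' : ℕ} {f g : (Fin n → ℂ) × (Fin n → ℂ) → ℂ} (hf : f ∈ TT n M)
    (hg : g ∈ TT n M') : f * g ∈ TT n (M + M') := by
  have h := Submodule.mul_mem_mul hf hg
  rw [TT, TT, Submodule.span_mul_span] at h
  refine Submodule.span_mono ?_ h
  rintro _ ⟨_, ⟨p, q, hp, hq, rfl⟩, _, ⟨p', q', hp', hq', rfl⟩, rfl⟩
  refine ⟨p * p', q * q', (MvPolynomial.totalDegree_mul _ _).trans (add_le_add hp hp'),
    (MvPolynomial.totalDegree_mul _ _).trans (add_le_add hq hq'), ?_⟩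
  ext z
  simp; ring

lemma TT_one {n : ℕ} : (1 : (Fin n → ℂ) × (Fin n → ℂ) → ℂ) ∈ TT n 0 :=
  Submodule.subset_span ⟨1, 1, by simp, by simp, by ext z; simp⟩

lemma TT_pow {n : ℕ} {f : (Fin n → ℂ) × (Fin n → ℂ) → ℂ} (hf : f ∈ TT n 1) (k : ℕ) :
    f ^ k ∈ TT n k := by
  induction k with
  | zero => simpa using TT_one
  | succ k ih => rw [pow_succ]; exact TT_mul ih hf

lemma TT_fst {n : ℕ} (i : Fin n) :
    (fun z : (Fin n → ℂ) × (Fin n → ℂ) => z.1 i) ∈ TT n 1 :=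
  Submodule.subset_span ⟨MvPolynomial.X i, 1, by simp, by simp, by ext z; simp⟩

lemma TT_snd {n : ℕ} (i : Fin n) :
    (fun z : (Fin n → ℂ) × (Fin n → ℂ) => z.2 i) ∈ TT n 1 :=
  Submodule.subset_span ⟨1, MvPolynomial.X i, by simp, by simp, by ext z; simp⟩

lemma TT_sub {n : ℕ} (i : Fin n) :
    (fun z : (Fin n → ℂ) × (Fin n → ℂ) => z.1 i - z.2 i) ∈ TT n 1 :=
  Submodule.sub_mem _ (TT_fst i) (TT_snd i)

lemma TT_main {n N : ℕ} (j : Fin 3 → Fin n) (i : Fin n) (a : Fin 3 → Fin (N + 1))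
    (b : Fin (N + 1)) :
    (fun z : (Fin n → ℂ) × (Fin n → ℂ) =>
      (∏ l, (z.1 (j l) - z.2 (j l)) ^ (a l : ℕ)) * z.1 i ^ (N - b : ℕ)) ∈ TT n (4 * N) := by
  have h := TT_mul (TT_mul (TT_mul (TT_pow (TT_sub (j 0)) (a 0 : ℕ))
    (TT_pow (TT_sub (j 1)) (a 1 : ℕ))) (TT_pow (TT_sub (j 2)) (a 2 : ℕ)))
    (TT_pow (TT_fst i) (N - b : ℕ))
  have h0 := (a 0).is_lt
  have h1 := (a 1).is_lt
  have h2 := (a 2).is_lt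
  refine TT_mono (M := (a 0 : ℕ) + (a 1 : ℕ) + (a 2 : ℕ) + (N - (b : ℕ))) (by omega) ?_
  · convert h using 1
    ext z
    simp [Fin.prod_univ_three]

lemma TT_HB {n M : ℕ} {X : Set (Fin n → ℂ)} {ι : Type} [Fintype ι] (b : ι → (Fin n → ℂ) → ℂ)
    (hb : ∀ p : MvPolynomial (Fin n) ℂ, p.totalDegree ≤ M →
      ∃ a : ι → ℂ, ∀ x ∈ X, MvPolynomial.eval x p = ∑ k, a k * b k x)
    {f : (Fin n → ℂ) × (Fin n → ℂ) → ℂ} (hf : f ∈ TT n M) :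
    ∃ A : ι × ι → ℂ, ∀ x ∈ X, ∀ y ∈ X, f (x, y) = ∑ k, A k * (b k.1 x * b k.2 y) := by
  induction hf using Submodule.span_induction with
  | mem f hf =>
    obtain ⟨p, q, hp, hq, rfl⟩ := hf
    obtain ⟨u, hu⟩ := hb p hp
    obtain ⟨w, hw⟩ := hb q hq
    refine ⟨fun k => u k.1 * w k.2, fun x hx y hy => ?_⟩
    simp only [hu x hx, hw y hy, Finset.sum_mul_sum, Fintype.sum_prod_type]
    refine Finset.sum_congr rfl fun _ _ => Finset.sum_congr rfl fun _ _ => by ring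
  | zero => exact ⟨0, by simp⟩
  | add f g _ _ hf hg =>
    obtain ⟨u, hu⟩ := hf
    obtain ⟨w, hw⟩ := hg
    refine ⟨u + w, fun x hx y hy => ?_⟩
    simp [hu x hx y hy, hw x hx y hy, add_mul, Finset.sum_add_distrib]
  | smul c f _ hf =>
    obtain ⟨u, hu⟩ := hf
    refine ⟨c • u, fun x hx y hy => ?_⟩
    simp [hu x hx y hy, Finset.mul_sum, mul_assoc]

lemma relation {n : ℕ} {X : Set (Fin n → ℂ)} (hX : HB X) (j : Fin 3 → Fin n) (i : Fin n) :
    ∃ (N : ℕ) (c : (Fin 3 → Fin (N + 1)) × Fin (N + 1) → ℂ), (∃ k, c k ≠ 0) ∧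
      ∀ x ∈ X, ∀ y ∈ X, ∀ t : ℂ, ∑ k, c k * (t ^ (∑ l, (k.1 l : ℕ)) *
        ((∏ l, (x (j l) - y (j l)) ^ (k.1 l : ℕ)) * x i ^ (N - k.2 : ℕ))) = 0 := by
  classical
  obtain ⟨c, hc⟩ := hX
  let N := 48 * c ^ 2
  obtain ⟨ι, _, b, hι, hb⟩ := hc (4 * N)
  have h1 : ∀ k : (Fin 3 → Fin (N + 1)) × Fin (N + 1), ∃ A : ι × ι → ℂ, ∀ x ∈ X, ∀ y ∈ X,
      (∏ l, (x (j l) - y (j l)) ^ (k.1 l : ℕ)) * x i ^ (N - k.2 : ℕ)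
        = ∑ m, A m * (b m.1 x * b m.2 y) := fun k => TT_HB b hb (TT_main j i k.1 k.2)
  choose A hA using h1
  let v : (Fin 3 → Fin (N + 1)) × Fin (N + 1) → (Fin (3 * N + 1) × (ι × ι) → ℂ) :=
    fun k m => if (m.1 : ℕ) = ∑ l, (k.1 l : ℕ) then A k m.2 else 0
  have hv : ¬ LinearIndependent ℂ v := by
    intro h
    have := h.fintype_card_le_finrank
    rw [Module.finrank_fintype_fun_eq_card] at this
    simp only [Fintype.card_prod, Fintype.card_pi, Fintype.card_fin, Finset.prod_const,
      Finset.card_univ] at this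
    have h2 : Fintype.card ι * Fintype.card ι ≤ (c * (4 * N + 1)) * (c * (4 * N + 1)) :=
      Nat.mul_le_mul hι hι
    have h3 : (3 * N + 1) * (Fintype.card ι * Fintype.card ι) ≤
        (3 * (N + 1)) * ((c * (4 * (N + 1))) * (c * (4 * (N + 1)))) := by
      refine Nat.mul_le_mul (by omega) (h2.trans ?_)
      gcongr <;> omega
    have h4 : (N + 1) ^ 3 * (N + 1) ≤ (N + 1) ^ 3 * (48 * c ^ 2) := by
      calc _ ≤ _ := this
        _ ≤ _ := h3
        _ = _ := by ring
    have h5 := Nat.le_of_mul_le_mul_left h4 (by positivity)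
    simp only [N] at h5
    omega
  rw [Fintype.not_linearIndependent_iff] at hv
  obtain ⟨g, hg, hg0⟩ := hv
  refine ⟨N, g, hg0, fun x hx y hy t => ?_⟩
  have h2 : ∀ m, ∑ k, g k * v k m = 0 := fun m => by
    have := congrFun hg m
    simpa using this
  have h3 : ∀ k : (Fin 3 → Fin (N + 1)) × Fin (N + 1), t ^ (∑ l, (k.1 l : ℕ)) *
        ((∏ l, (x (j l) - y (j l)) ^ (k.1 l : ℕ)) * x i ^ (N - k.2 : ℕ))
      = ∑ m : Fin (3 * N + 1) × (ι × ι), v k m * (t ^ (m.1 : ℕ) * (b m.2.1 x * b m.2.2 y)) := by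
    intro k
    have hlt : ∑ l, (k.1 l : ℕ) < 3 * N + 1 := by
      have h0 := (k.1 0).is_lt
      have h1 := (k.1 1).is_lt
      have h2 := (k.1 2).is_lt
      rw [Fin.sum_univ_three]; omega
    rw [Fintype.sum_prod_type, Finset.sum_eq_single (⟨_, hlt⟩ : Fin (3 * N + 1))]
    · rw [hA k x hx y hy, Finset.mul_sum]
      refine Finset.sum_congr rfl fun m _ => ?_
      simp only [v, if_true]
      ring
    · intro m _ hm
      refine Finset.sum_eq_zero fun r _ => ?_
      have : (m : ℕ) ≠ ∑ l, (k.1 l : ℕ) := fun h => hm (Fin.ext h)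
      simp [v, this]
    · simp
  simp_rw [h3, Finset.mul_sum]
  rw [Finset.sum_comm]
  refine Finset.sum_eq_zero fun m _ => ?_
  have := h2 m
  simp_rw [← mul_assoc, ← Finset.sum_mul]
  rw [this]; simp

lemma nearby {n : ℕ} {X : Set (Fin n → ℂ)} (hX : HB X) (j : Fin 3 → Fin n)
    (hj : Function.Injective j) (i : Fin n) :
    ∃ P : MvPolynomial (Fin n) ℂ, P ≠ 0 ∧ ∀ v : Fin n → ℂ, MvPolynomial.eval v P ≠ 0 →
      ∃ ε > 0, ∃ R : ℝ, ∀ x ∈ X, ∀ y ∈ X, ∀ t : ℂ, R ≤ ‖x i‖ → ε ≤ ‖t • (x - y) - v‖ := by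
  classical
  obtain ⟨N, c, hc0, hc⟩ := relation hX j i
  obtain ⟨⟨b0, hb0⟩, hmin⟩ : ∃ B : {b : Fin (N + 1) // ∃ a, c (a, b) ≠ 0},
      ∀ B' : {b : Fin (N + 1) // ∃ a, c (a, b) ≠ 0}, B ≤ B' := by
    obtain ⟨k, hk⟩ := hc0
    have : Nonempty {b : Fin (N + 1) // ∃ a, c (a, b) ≠ 0} := ⟨⟨k.2, k.1, hk⟩⟩
    obtain ⟨B, hB⟩ := Finite.exists_min (id : {b : Fin (N + 1) // ∃ a, c (a, b) ≠ 0} → _)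
    exact ⟨B, hB⟩
  have hlow : ∀ a b, b < b0 → c (a, b) = 0 := by
    intro a b hb
    by_contra h
    exact absurd (hmin ⟨b, a, h⟩) (not_le.2 hb)
  let σ : (Fin 3 → Fin (N + 1)) → (Fin 3 →₀ ℕ) :=
    fun a => Finsupp.equivFunOnFinite.symm fun l => (a l : ℕ)
  have hσ : Function.Injective σ := by
    intro α β h
    have := Finsupp.equivFunOnFinite.symm.injective h
    ext i
    exact congrFun this i
  let P : MvPolynomial (Fin 3) ℂ := ∑ a, MvPolynomial.monomial (σ a) (c (a, b0))
  have hP : P ≠ 0 := by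
    obtain ⟨a, ha⟩ := hb0
    intro h
    apply ha
    have := congrArg (MvPolynomial.coeff (σ a)) h
    simpa [P, MvPolynomial.coeff_sum, MvPolynomial.coeff_monomial, hσ.eq_iff] using this
  refine ⟨MvPolynomial.rename j P, fun h => hP (MvPolynomial.rename_injective j hj (by simpa using h)), ?_⟩
  intro v hv
  let G : (Fin n → ℂ) × ℂ → ℂ := fun z => ∑ k : (Fin 3 → Fin (N + 1)) × Fin (N + 1),
    c k * ((∏ l, z.1 (j l) ^ (k.1 l : ℕ)) * z.2 ^ (k.2 - b0 : ℕ))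
  have hG : Continuous G := by fun_prop
  have hG0 : G (v, 0) ≠ 0 := by
    convert hv using 1
    rw [MvPolynomial.eval_rename]
    simp only [G, P, map_sum, MvPolynomial.eval_monomial, Fintype.sum_prod_type]
    refine Finset.sum_congr rfl fun a _ => ?_
    rw [Finset.sum_eq_single b0]
    · simp [σ, Finsupp.prod_fintype]
    · intro b _ hb
      rcases lt_or_gt_of_ne hb with h | h
      · simp [hlow a b h]
      · have : (b : ℕ) - b0 ≠ 0 := by
          have : (b0 : ℕ) < b := h
          omega
        simp [this]
    · simp
  have hev := hG.continuousAt.eventually_ne hG0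
  obtain ⟨ε, hε, hball⟩ := Metric.eventually_nhds_iff_ball.1 hev
  refine ⟨ε, hε, ε⁻¹ + 1, fun x hx y hy t hxi => ?_⟩
  by_contra! hlt
  have hpos : ε⁻¹ + 1 > 0 := by positivity
  have hx0 : x i ≠ 0 := by
    intro h; rw [h, norm_zero] at hxi; linarith
  refine hball (t • (x - y), (x i)⁻¹) ?_ ?_
  · rw [mem_ball, Prod.dist_eq]
    refine max_lt ?_ ?_
    · rwa [dist_eq_norm]
    · simp only [dist_zero_right, norm_inv]
      rw [inv_lt_comm₀ (by linarith) hε]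
      linarith
  · have h := hc x hx y hy t
    have h2 : G (t • (x - y), (x i)⁻¹) * x i ^ (N - b0 : ℕ) = ∑ k : (Fin 3 → Fin (N + 1)) × Fin (N + 1), c k * (t ^ (∑ l, (k.1 l : ℕ)) *
        ((∏ l, (x (j l) - y (j l)) ^ (k.1 l : ℕ)) * x i ^ (N - k.2 : ℕ))) := by
      simp only [G, Finset.sum_mul]
      refine Finset.sum_congr rfl fun k _ => ?_
      by_cases hk : k.2 < b0
      · have : c k = 0 := hlow k.1 k.2 hk
        simp [this]
      · have hk' : (b0 : ℕ) ≤ k.2 := not_lt.1 hk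
        have hkN := k.2.is_lt
        have e : (N - b0 : ℕ) = (k.2 - b0) + (N - k.2) := by omega
        rw [e, pow_add, inv_pow]
        simp only [Pi.smul_apply, Pi.sub_apply, smul_eq_mul, mul_pow, Finset.prod_mul_distrib,
          Finset.prod_pow_eq_pow_sum]
        have := pow_ne_zero (k.2 - b0 : ℕ) hx0
        field_simp
    rw [h] at h2
    exact (mul_eq_zero.1 h2).resolve_right (pow_ne_zero _ hx0)

lemma good_dir {n : ℕ} (hn : 3 ≤ n) {X : Set (Fin n → ℂ)} (hX : HB X) :
    ∃ v : Fin n → ℂ, v ≠ 0 ∧ ∃ ε > 0, ∃ R : ℝ, ∀ x ∈ X, ∀ y ∈ X, ∀ t : ℂ,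
      R ≤ ‖x‖ → ε ≤ ‖t • (x - y) - v‖ := by
  classical
  choose P hP0 hP using nearby hX (Fin.castLE hn) (Fin.castLE_injective hn)
  let i0 : Fin n := ⟨0, by omega⟩
  let Q := MvPolynomial.X i0 * ∏ i, P i
  have hQ : Q ≠ 0 := mul_ne_zero (MvPolynomial.X_ne_zero _)
    (Finset.prod_ne_zero_iff.2 fun i _ => hP0 i)
  obtain ⟨v, hv⟩ : ∃ v, MvPolynomial.eval v Q ≠ 0 := by
    by_contra! h
    exact hQ (MvPolynomial.funext fun x => by simpa using h x)
  simp only [Q, map_mul, map_prod, MvPolynomial.eval_X] at hv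
  have hv1 := left_ne_zero_of_mul hv
  have hv2 := Finset.prod_ne_zero_iff.1 (right_ne_zero_of_mul hv)
  refine ⟨v, fun h => hv1 (by simp [h]), ?_⟩
  choose ε hε R hR using fun i => hP i v (hv2 i (Finset.mem_univ i))
  have : Nonempty (Fin n) := ⟨i0⟩
  obtain ⟨i1, hi1⟩ := Finite.exists_min ε
  obtain ⟨i2, hi2⟩ := Finite.exists_max R
  refine ⟨ε i1, hε i1, R i2, fun x hx y hy t hx' => ?_⟩
  obtain ⟨i, hi⟩ : ∃ i, ‖x‖ ≤ ‖x i‖ := by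
    obtain ⟨i, hi⟩ := Finite.exists_max fun i => ‖x i‖
    exact ⟨i, (pi_norm_le_iff_of_nonempty _).2 hi⟩
  exact (hi1 i).trans (hR i x hx y hy t ((hi2 i).trans (hx'.trans hi)))

lemma proj_exists {m : ℕ} (v : EuclideanSpace ℂ (Fin (m + 1))) (hv : v ≠ 0) :
    ∃ π : EuclideanSpace ℂ (Fin (m + 1)) →ₗ[ℂ] EuclideanSpace ℂ (Fin m),
      Function.Surjective π ∧ (∀ z, ‖π z‖ ≤ ‖z‖) ∧
      ∀ ε > 0, ∀ z, (∀ t : ℂ, ε ≤ ‖t • z - v‖) → ‖z‖ ≤ (‖v‖ / ε + 1) * ‖π z‖ := by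
  have : Fact (Module.finrank ℂ (EuclideanSpace ℂ (Fin (m + 1))) = m + 1) := ⟨by simp⟩
  let b := OrthonormalBasis.fromOrthogonalSpanSingleton (𝕜 := ℂ) m hv
  let K : Submodule ℂ (EuclideanSpace ℂ (Fin (m + 1))) := ℂ ∙ v
  let p : EuclideanSpace ℂ (Fin (m + 1)) →L[ℂ] Kᗮ := Kᗮ.orthogonalProjectionOnto
  let π : EuclideanSpace ℂ (Fin (m + 1)) →ₗ[ℂ] EuclideanSpace ℂ (Fin m) :=
    b.repr.toLinearEquiv.toLinearMap ∘ₗ p.toLinearMap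
  have hπ : ∀ z, ‖π z‖ = ‖p z‖ := fun z => b.repr.norm_map _
  refine ⟨π, ?_, ?_, ?_⟩
  · refine b.repr.surjective.comp (fun z => ⟨(z : EuclideanSpace ℂ (Fin (m + 1))), ?_⟩)
    exact Submodule.orthogonalProjectionOnto_mem_subspace_eq_self z
  · intro z
    rw [hπ]
    exact Submodule.norm_orthogonalProjectionOnto_apply_le _ z
  · intro ε hε z hz
    rw [hπ]
    have hdec : z = K.starProjection z + Kᗮ.starProjection z :=
      (K.starProjection_add_starProjection_orthogonal z).symm
    obtain ⟨α, hα⟩ := Submodule.mem_span_singleton.1 (K.starProjection_apply_mem z)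
    rw [← hα] at hdec
    have hw : ‖Kᗮ.starProjection z‖ = ‖p z‖ := rfl
    set w := Kᗮ.starProjection z with hwdef
    have hle : ‖α‖ * ε ≤ ‖w‖ := by
      by_cases h0 : α = 0
      · simp [h0]
      · have h1 := hz α⁻¹
        have h2 : α⁻¹ • z - v = α⁻¹ • w := by
          rw [hdec, smul_add, smul_smul, inv_mul_cancel₀ h0, one_smul, add_sub_cancel_left]
        rw [h2, norm_smul, norm_inv] at h1
        have : 0 < ‖α‖ := norm_pos_iff.2 h0
        rwa [inv_mul_eq_div, le_div_iff₀ this, mul_comm] at h1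
    rw [← hw]
    calc ‖z‖ = ‖α • v + w‖ := by rw [← hdec]
      _ ≤ ‖α‖ * ‖v‖ + ‖w‖ := (norm_add_le _ _).trans (by rw [norm_smul])
      _ ≤ (‖w‖ / ε) * ‖v‖ + ‖w‖ := by
        gcongr
        rwa [le_div_iff₀ hε]
      _ = _ := by ring

lemma HB_irred {n : ℕ} {C : Set (EuclideanSpace ℂ (Fin n))} (hC : IsIrreducibleAlgebraicCurve C) :
    HB {z : Fin n → ℂ | WithLp.toLp 2 z ∈ C} := by
  classical
  obtain ⟨⟨S, hS⟩, hinf, hfin⟩ := hC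
  refine HB_of_curve S _ ?_ ?_ ?_
  · ext z; rw [hS]; rfl
  · obtain ⟨x, hx⟩ := hinf.nonempty
    exact ⟨WithLp.ofLp x, hx⟩
  · rintro f ⟨x, hx, hxf⟩
    have h := hfin {y | y ∈ C ∧ MvPolynomial.eval (fun i => y i) f = 0} ⟨insert f S, by
        ext y
        rw [hS]
        simp [and_comm]⟩
      ⟨fun y hy => hy.1, fun hsub => hxf (hsub hx).2⟩
    refine (h.image WithLp.ofLp).subset ?_
    rintro z ⟨hz, hzf⟩
    exact ⟨WithLp.toLp 2 z, ⟨hz, hzf⟩, rfl⟩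

lemma isClosed_curve {n : ℕ} {X : Set (EuclideanSpace ℂ (Fin n))} (hX : IsAlgebraicCurve X) :
    IsClosed X := by
  obtain ⟨F, hF, rfl⟩ := hX
  refine F.finite_toSet.isClosed_biUnion fun C hC => ?_
  obtain ⟨⟨S, rfl⟩, -⟩ := hF C hC
  simp only [Set.ofPred_forall]
  refine isClosed_iInter fun p => isClosed_iInter fun _ => ?_
  refine isClosed_eq ?_ continuous_const
  have h1 := MvPolynomial.continuous_eval p
  exact h1.comp (by fun_prop)

lemma final {m : ℕ} (hn : 3 ≤ m + 1) (X : Set (EuclideanSpace ℂ (Fin (m + 1))))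
    (hX : IsAlgebraicCurve X) :
    ∃ (r : ℝ) (π : EuclideanSpace ℂ (Fin (m + 1)) →ₗ[ℂ] EuclideanSpace ℂ (Fin m)),
      0 < r ∧ Function.Surjective π ∧
      (∀ K : Set (EuclideanSpace ℂ (Fin m)), IsCompact K → IsCompact (X ∩ ⇑π ⁻¹' K)) ∧
      (∃ C : ℝ, 1 ≤ C ∧
        ∀ x ∈ X \ ⇑π ⁻¹' Metric.ball 0 r, ∀ y ∈ X \ ⇑π ⁻¹' Metric.ball 0 r,
          C⁻¹ * ‖x - y‖ ≤ ‖π x - π y‖ ∧ ‖π x - π y‖ ≤ C * ‖x - y‖) ∧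
      Set.MapsTo (⇑π) (X \ ⇑π ⁻¹' Metric.ball 0 r) ((Metric.ball 0 r)ᶜ) := by
  have hHB : HB {z : Fin (m + 1) → ℂ | WithLp.toLp 2 z ∈ X} := by
    obtain ⟨F, hF, rfl⟩ := hX
    convert HB_biUnion F (fun C => {z : Fin (m + 1) → ℂ | WithLp.toLp 2 z ∈ C})
      (fun C hC => HB_irred (hF C hC)) using 1
    ext z; simp
  obtain ⟨v, hv, ε, hε, R, hR⟩ := good_dir hn hHB
  let v' : EuclideanSpace ℂ (Fin (m + 1)) := WithLp.toLp 2 v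
  have hv' : v' ≠ 0 := fun h => hv (by
    have := congrArg WithLp.ofLp h
    simpa [v'] using this)
  obtain ⟨π, hsurj, hle, hbound⟩ := proj_exists v' hv'
  -- norm comparison
  have hsup : ∀ x : EuclideanSpace ℂ (Fin (m + 1)), ‖WithLp.ofLp x‖ ≤ ‖x‖ := fun x =>
    (pi_norm_le_iff_of_nonneg (norm_nonneg _)).2 fun i => PiLp.norm_apply_le x i
  obtain ⟨D, hD⟩ : ∃ D : ℝ, ∀ x : EuclideanSpace ℂ (Fin (m + 1)), D ≤ ‖x‖ → R ≤ ‖WithLp.ofLp x‖ := by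
    by_contra! h
    choose x hx hx' using h
    have hcpt : Bornology.IsBounded (WithLp.ofLp ⁻¹' (Metric.closedBall (0 : Fin (m + 1) → ℂ) R) : Set (EuclideanSpace ℂ (Fin (m + 1)))) :=
      ((PiLp.continuousLinearEquiv 2 ℂ (fun _ : Fin (m + 1) => ℂ)).antilipschitz).isBounded_preimage
        Metric.isBounded_closedBall
    obtain ⟨B, hB⟩ := hcpt.exists_norm_le
    have h1 := hB (x (B + 1)) (by simpa using (hx' (B + 1)).le)
    have h2 := hx (B + 1)
    linarith
  set C0 := ‖v'‖ / ε + 1 with hC0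
  have hC0' : 1 ≤ C0 := by
    have : 0 ≤ ‖v'‖ / ε := by positivity
    linarith
  have hsec : ∀ x ∈ X, ∀ y ∈ X, D ≤ ‖x‖ → ‖x - y‖ ≤ C0 * ‖π (x - y)‖ := by
    intro x hx y hy hDx
    refine hbound ε hε _ fun t => ?_
    refine (hR (WithLp.ofLp x) hx (WithLp.ofLp y) hy t (hD x hDx)).trans ?_
    exact hsup (t • (x - y) - v')
  have hπc : Continuous π := π.continuous_of_finiteDimensional
  refine ⟨max D 1, π, by positivity, hsurj, ?_, ⟨C0, hC0', ?_⟩, fun x hx => hx.2⟩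
  · intro K hK
    refine Metric.isCompact_of_isClosed_isBounded ((isClosed_curve hX).inter (hK.isClosed.preimage hπc)) ?_
    rcases X.eq_empty_or_nonempty with rfl | ⟨y, hy⟩
    · simp
    obtain ⟨B, hB⟩ := hK.isBounded.exists_norm_le
    refine isBounded_iff_forall_norm_le.2 ⟨max D (‖y‖ + C0 * (B + ‖π y‖)), fun x hx => ?_⟩
    rcases le_total ‖x‖ D with h | h
    · exact le_max_of_le_left h
    · refine le_max_of_le_right ?_
      have h1 := hsec x hx.1 y hy h
      have h2 : ‖π (x - y)‖ ≤ B + ‖π y‖ := by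
        rw [map_sub]
        exact (norm_sub_le _ _).trans (by gcongr; exact hB _ hx.2)
      have h3 : ‖x‖ ≤ ‖y‖ + ‖x - y‖ := norm_le_norm_add_norm_sub' x y
      nlinarith
  · intro x hx y hy
    rw [← map_sub]
    have hDx : D ≤ ‖x‖ := by
      have : max D 1 ≤ ‖π x‖ := by simpa using hx.2
      exact (le_max_left _ _).trans (this.trans (hle x))
    refine ⟨?_, (hle _).trans (le_mul_of_one_le_left (norm_nonneg _) hC0')⟩
    rw [inv_mul_le_iff₀ (by linarith)]
    exact hsec x hx.1 y hy.1 hDx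

/-- For `n ≥ 3` and an algebraic curve `X ⊂ ℂⁿ`, there exist `r > 0` and a
surjective linear map `π : ℂⁿ → ℂⁿ⁻¹` whose restriction to `X` is proper and which is
bi-Lipschitz on `X \ π⁻¹(B(0,r))`, mapping it into `ℂⁿ⁻¹ \ B(0,r)`. -/
theorem stmt_1 (n : ℕ) (hn : 3 ≤ n) (X : Set (EuclideanSpace ℂ (Fin n)))
    (hX : IsAlgebraicCurve X) :
    ∃ (r : ℝ) (π : EuclideanSpace ℂ (Fin n) →ₗ[ℂ] EuclideanSpace ℂ (Fin (n - 1))),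
      0 < r ∧ Function.Surjective π ∧
      (∀ K : Set (EuclideanSpace ℂ (Fin (n - 1))), IsCompact K → IsCompact (X ∩ ⇑π ⁻¹' K)) ∧
      (∃ C : ℝ, 1 ≤ C ∧
        ∀ x ∈ X \ ⇑π ⁻¹' Metric.ball 0 r, ∀ y ∈ X \ ⇑π ⁻¹' Metric.ball 0 r,
          C⁻¹ * ‖x - y‖ ≤ ‖π x - π y‖ ∧ ‖π x - π y‖ ≤ C * ‖x - y‖) ∧
      Set.MapsTo (⇑π) (X \ ⇑π ⁻¹' Metric.ball 0 r) ((Metric.ball 0 r)ᶜ) := by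
  obtain ⟨m, rfl⟩ : ∃ m, n = m + 1 := ⟨n - 1, by omega⟩
  exact final hn X hX

end
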